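/- arXiv:1011.1110 — 2 statements merged into one kernel-verified Lean document; each statement's English description precedes it below -/
import Mathlib

section
/- Let 𝗐 = (s_{d_1},…,s_{d_ℓ}) be a reduced word for a permutation w ∈ S_n. If σ⁽¹⁾ and σ⁽²⁾ are two distinct masks on 𝗐, then the associated tuples of coordinate subspaces are distinct: there exists an index j with V_j(σ⁽¹⁾) ≠ V_j(σ⁽²⁾). In other words, the map σ ↦ (V_1(σ),…,V_ℓ(σ)) from masks on 𝗐 to tuples of subspaces of ℂ^n is injective. -/
/-! At the first index `j` where the masks differ, the prefix products before `j` agree; call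
the common value `u`. One mask gives `V_j = u⟨e_1, …, e_d⟩` and the other
`V_j = u s_d⟨e_1, …, e_d⟩`, and only the first contains `e_{u(d)}`. Coordinate subspaces determine
their index sets (`stdVec_mem_coordSubspace`), so the two differ. -/

noncomputable section

/-- The adjacent transposition `s_i` of `Fin (n+1)` swapping `i` and `i+1`
(0-based; this is the paper's `s_{i+1}` in 1-based notation). -/
def adjTransposition {n : ℕ} (i : Fin n) : Equiv.Perm (Fin (n + 1)) :=
  Equiv.swap i.castSucc i.succ

/-- The product `𝗐^{σ[j]}` of the first `j` letters of the word `ds` selected by the mask `σ`. -/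
def maskPerm {n ℓ : ℕ} (ds : Fin ℓ → Fin n) (σ : Fin ℓ → Bool) :
    ℕ → Equiv.Perm (Fin (n + 1))
  | 0 => 1
  | j + 1 =>
      maskPerm ds σ j *
        if h : j < ℓ then (if σ ⟨j, h⟩ then adjTransposition (ds ⟨j, h⟩) else 1) else 1

/-- The standard basis vector `e_k` of `ℂ^(n+1)`. -/
def stdVec {n : ℕ} (k : Fin (n + 1)) : Fin (n + 1) → ℂ := Pi.single k 1

/-- The coordinate subspace of `ℂ^(n+1)` spanned by the standard basis vectors `e_k`, `k ∈ S`. -/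
def coordSubspace {n : ℕ} (S : Set (Fin (n + 1))) : Submodule ℂ (Fin (n + 1) → ℂ) :=
  Submodule.span ℂ (stdVec '' S)

/-- The subspace `E_i = span(e_1, …, e_i)` (1-based), i.e. the span of the first `i`
standard basis vectors. -/
def Esub (n i : ℕ) : Submodule ℂ (Fin (n + 1) → ℂ) :=
  coordSubspace {k : Fin (n + 1) | (k : ℕ) < i}

/-- The coordinate subspace `V_j(σ) = span(e_{𝗐^{σ[j]}(1)}, …, e_{𝗐^{σ[j]}(d_j)})`, where the
paper's `d_j` is `(ds j : ℕ) + 1` and the paper's (1-based) position `j` is our `(j : ℕ) + 1`. -/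
def Vsub {n ℓ : ℕ} (ds : Fin ℓ → Fin n) (σ : Fin ℓ → Bool) (j : Fin ℓ) :
    Submodule ℂ (Fin (n + 1) → ℂ) :=
  coordSubspace ((maskPerm ds σ ((j : ℕ) + 1)) '' {k : Fin (n + 1) | (k : ℕ) ≤ (ds j : ℕ)})

/-- `ds` is a reduced word for the permutation `w`: its product is `w` and no shorter word of
adjacent transpositions has product `w`. -/
def IsReducedWord {n ℓ : ℕ} (ds : Fin ℓ → Fin n) (w : Equiv.Perm (Fin (n + 1))) : Prop :=
  maskPerm ds (fun _ => true) ℓ = w ∧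
    ∀ (ℓ' : ℕ) (ds' : Fin ℓ' → Fin n),
      maskPerm ds' (fun _ => true) ℓ' = w → ℓ ≤ ℓ'

/-- `k = lpred(j)`: the largest index `k < j` with `d_k = d_j - 1`. -/
def IsLpred {n ℓ : ℕ} (ds : Fin ℓ → Fin n) (j k : Fin ℓ) : Prop :=
  k < j ∧ (ds k : ℕ) + 1 = (ds j : ℕ) ∧
    ∀ m : Fin ℓ, k < m → m < j → (ds m : ℕ) + 1 ≠ (ds j : ℕ)

/-- `k = rpred(j)`: the largest index `k < j` with `d_k = d_j + 1`. -/
def IsRpred {n ℓ : ℕ} (ds : Fin ℓ → Fin n) (j k : Fin ℓ) : Prop :=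
  k < j ∧ (ds k : ℕ) = (ds j : ℕ) + 1 ∧
    ∀ m : Fin ℓ, k < m → m < j → (ds m : ℕ) ≠ (ds j : ℕ) + 1

theorem stdVec_mem_coordSubspace {n : ℕ} (S : Set (Fin (n + 1))) (k : Fin (n + 1)) :
    stdVec k ∈ coordSubspace S ↔ k ∈ S := by
  have hli : LinearIndependent ℂ (stdVec : Fin (n + 1) → Fin (n + 1) → ℂ) := by
    have h := (Pi.basisFun ℂ (Fin (n + 1))).linearIndependent
    convert h using 1
    funext k
    simp [stdVec]
  exact ⟨fun h => by_contra fun hk => hli.notMem_span_image hk h,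
    fun h => Submodule.subset_span ⟨k, h, rfl⟩⟩

/-- The prefix product of length `j` depends only on the first `j` entries of the mask. -/
theorem maskPerm_congr {n ℓ : ℕ} (ds : Fin ℓ → Fin n) (σ τ : Fin ℓ → Bool) (j : ℕ)
    (h : ∀ i : Fin ℓ, (i : ℕ) < j → σ i = τ i) : maskPerm ds σ j = maskPerm ds τ j := by
  induction j with
  | zero => rfl
  | succ j ih =>
    have hj : ∀ hl : j < ℓ, σ ⟨j, hl⟩ = τ ⟨j, hl⟩ := fun hl => h _ (Nat.lt_succ_self j)
    simp only [maskPerm, ih fun i hi => h i (hi.trans (Nat.lt_succ_self j)), hj]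

/-- Masks agreeing before `j` and differing at `j` have different subspaces `V_j`. -/
theorem Vsub_ne_of_true_false {n ℓ : ℕ} (ds : Fin ℓ → Fin n) (σ τ : Fin ℓ → Bool) (j : Fin ℓ)
    (h : ∀ i : Fin ℓ, i < j → σ i = τ i) (hσ : σ j = true) (hτ : τ j = false) :
    Vsub ds σ j ≠ Vsub ds τ j := by
  intro hV
  have hpre : maskPerm ds σ j = maskPerm ds τ j := maskPerm_congr ds σ τ j h
  have hmem : stdVec (maskPerm ds τ j (ds j).castSucc) ∈ Vsub ds τ j := by
    rw [Vsub, stdVec_mem_coordSubspace]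
    exact ⟨(ds j).castSucc, by simp, by simp [maskPerm, hτ]⟩
  rw [← hV, Vsub, stdVec_mem_coordSubspace] at hmem
  obtain ⟨k, hk, hkeq⟩ := hmem
  simp only [maskPerm, j.isLt, dif_pos, Fin.eta, hσ, if_true, hpre, Equiv.Perm.mul_apply,
    EmbeddingLike.apply_eq_iff_eq] at hkeq
  -- The transposition sends only `d + 1` to `d`, and `d + 1` exceeds the bound on `k`.
  have hk' : k = (ds j).succ := by
    apply (adjTransposition (ds j)).injective
    rw [hkeq, adjTransposition, Equiv.swap_apply_right]
  simp [hk'] at hk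

/-- Distinct masks give distinct tuples of coordinate subspaces: the map
`σ ↦ (V_1(σ), …, V_ℓ(σ))` is injective. -/
theorem mask_to_fixed_point_injective {n ℓ : ℕ} (ds : Fin ℓ → Fin n)
    (w : Equiv.Perm (Fin (n + 1))) (hred : IsReducedWord ds w)
    (σ₁ σ₂ : Fin ℓ → Bool) (hne : σ₁ ≠ σ₂) :
    ∃ j : Fin ℓ, Vsub ds σ₁ j ≠ Vsub ds σ₂ j := by
  classical
  have hex : ∃ j : Fin ℓ, σ₁ j ≠ σ₂ j := Function.ne_iff.mp hne
  obtain ⟨j, hj, hmin⟩ := WellFounded.has_min (wellFounded_lt (α := Fin ℓ))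
    {j | σ₁ j ≠ σ₂ j} hex
  have hlt : ∀ i : Fin ℓ, i < j → σ₁ i = σ₂ i := fun i hi =>
    by_contra fun hc => hmin i hc hi
  refine ⟨j, ?_⟩
  change σ₁ j ≠ σ₂ j at hj
  cases h1 : σ₁ j <;> cases h2 : σ₂ j
  · simp [h1, h2] at hj
  · exact (Vsub_ne_of_true_false ds σ₂ σ₁ j (fun i hi => (hlt i hi).symm) h2 h1).symm
  · exact Vsub_ne_of_true_false ds σ₁ σ₂ j hlt h1 h2
  · simp [h1, h2] at hj
end
end

section
/- Let 𝗐 = (s_{d_1},…,s_{d_ℓ}) be a reduced word for a permutation w ∈ S_n and let σ be any mask on 𝗐. For each d with 1 ≤ d ≤ n−1 such that some d_j equals d, let last(d) denote the largest index j with d_j = d. Then V_{last(d)}(σ) = span(e_{𝗐^σ(1)},…,e_{𝗐^σ(d)}). (Equivalently, the Bott–Samelson resolution map π_𝗐 sends the torus-fixed point p_σ to the torus-fixed point p_{𝗐^σ} of the Schubert variety.) -/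
/-!
A letter `s_d` with `d ≠ i` permutes the initial segment `{k | k ≤ i}`, since it moves either two
elements of it or none. All letters after the last occurrence of `i` are of this kind, so extending
the prefix product `𝗐^{σ[j]}` by them on the right does not change the image of the initial segment
(`maskPerm_succ_image`, iterated in `maskPerm_image_of_le`). Hence the two coordinate subspaces are
spanned by the same basis vectors.
-/

noncomputable section

theorem adjTransposition_image {n : ℕ} {d i : Fin n} (h : d ≠ i) :
    adjTransposition d '' {k : Fin (n + 1) | (k : ℕ) ≤ (i : ℕ)}
      = {k : Fin (n + 1) | (k : ℕ) ≤ (i : ℕ)} := by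
  have h' : (d : ℕ) ≠ i := fun e => h (Fin.ext e)
  have key : ∀ k : Fin (n + 1), (k : ℕ) ≤ i → (adjTransposition d k : ℕ) ≤ i := by
    intro k hk
    unfold adjTransposition
    rw [Equiv.swap_apply_def]
    split_ifs with h1 h2
    · subst h1
      simp only [Fin.val_castSucc, Fin.val_succ] at hk ⊢
      omega
    · subst h2
      simp only [Fin.val_castSucc, Fin.val_succ] at hk ⊢
      omega
    · exact hk
  ext k
  constructor
  · rintro ⟨m, hm, rfl⟩
    exact key m hm
  · intro hk
    exact ⟨adjTransposition d k, key k hk, by simp [adjTransposition]⟩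

theorem maskPerm_succ_image {n ℓ : ℕ} (ds : Fin ℓ → Fin n) (σ : Fin ℓ → Bool) (i : Fin n)
    (m : ℕ) (hm : ∀ h : m < ℓ, ds ⟨m, h⟩ ≠ i) :
    maskPerm ds σ (m + 1) '' {k : Fin (n + 1) | (k : ℕ) ≤ (i : ℕ)}
      = maskPerm ds σ m '' {k : Fin (n + 1) | (k : ℕ) ≤ (i : ℕ)} := by
  rw [maskPerm, Equiv.Perm.coe_mul, Set.image_comp]
  split_ifs with h1 h2
  · rw [adjTransposition_image (hm h1)]
  · simp
  · simp

theorem maskPerm_image_of_le {n ℓ : ℕ} (ds : Fin ℓ → Fin n) (σ : Fin ℓ → Bool) (i : Fin n)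
    {a b : ℕ} (hab : a ≤ b) (hlast : ∀ m : Fin ℓ, a ≤ (m : ℕ) → ds m ≠ i) :
    maskPerm ds σ b '' {k : Fin (n + 1) | (k : ℕ) ≤ (i : ℕ)}
      = maskPerm ds σ a '' {k : Fin (n + 1) | (k : ℕ) ≤ (i : ℕ)} := by
  induction b, hab using Nat.le_induction with
  | base => rfl
  | succ b hb ih => rw [maskPerm_succ_image ds σ i b fun h => hlast ⟨b, h⟩ hb, ih]

/-- The Bott–Samelson resolution sends the fixed point `p_σ` to `p_{𝗐^σ}`: for each letter
value `i` occurring in the word, the subspace at the last occurrence of `i` equals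
`span(e_{𝗐^σ(1)}, …, e_{𝗐^σ(d)})` where `d = i + 1` (1-based). -/
theorem resolution_of_fixed_point {n ℓ : ℕ} (ds : Fin ℓ → Fin n)
    (w : Equiv.Perm (Fin (n + 1))) (hred : IsReducedWord ds w)
    (σ : Fin ℓ → Bool) (i : Fin n) (j : Fin ℓ)
    (hj : ds j = i) (hlast : ∀ m : Fin ℓ, j < m → ds m ≠ i) :
    Vsub ds σ j
      = coordSubspace ((maskPerm ds σ ℓ) '' {k : Fin (n + 1) | (k : ℕ) ≤ (i : ℕ)}) := by
  subst hj
  rw [Vsub, maskPerm_image_of_le ds σ (ds j) j.isLt fun m hm => hlast m hm]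
end
end
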